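/- arXiv:1206.2952 — 2 statements merged into one kernel-verified Lean document; each statement's English description precedes it below -/
import Mathlib

section
/- Let X be a metric space, let a, b ∈ X, and let F : X → ℝ be a nonnegative lower semicontinuous function with F(b) = 0. For ε > 0, let C_ε denote the set of finite sequences (v_0, …, v_k) of points of X (k ∈ ℕ arbitrary) with v_0 = a, v_k = b, and dist(v_i, v_{i+1}) ≤ ε for all 0 ≤ i < k; assume C_ε is nonempty for every ε > 0. For a sequence v = (v_0, …, v_k) ∈ C_ε and ε' > 0, let argmax^{ε'}(v) be the least index i ∈ {0,…,k} at which the quantity inf { F(u) : dist(u, v_i) < ε' } attains its maximum over all indices l ∈ {0,…,k}. Define the ε-bottleneck set B_ε = ⋃_{v ∈ C_ε} { u : dist(u, v_{argmax^{2ε}(v)}) < ε }, and let V(B_ε, ε) = { u : ∃ x ∈ B_ε, dist(u, x) < ε } be its open ε-neighborhood. Then, with limits taken in [0, +∞], the limit as ε → 0⁺ of inf { F(u) : u ∈ V(B_ε, ε) } exists and equals the limit as ε → 0⁺ of inf { max_{0 ≤ i ≤ k} F(v_i) : v = (v_0,…,v_k) ∈ C_ε }. -/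
/-!
Write `G ε` for the infimum of `F` over the `ε`-neighborhood of the bottleneck set and `H ε` for the
infimum over `ε`-chains of the maximum of `F`. Since `H` is antitone, it converges to
`L = ⨆ ε > 0, H ε`, and `L` is the limit of `G` because of three estimates.

* `G ε ≤ H ε`: the argmax of a chain is itself a point of the bottleneck set.
* `H (5 * ε) ≤ max (F a) (G ε)`: a point `u` of the neighborhood is within `2 * ε` of the argmax of
  some `ε`-chain, so every point of that chain can be moved by less than `2 * ε` to a point where
  `F` is at most slightly above `F u`. Keeping the endpoints `a` and `b` fixed gives a
  `5 * ε`-chain; at `b` this is free because `F b = 0`, and `a` accounts for the term `F a`.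
* If `c < F a` then eventually `c ≤ G ε`: the score of the first point `a` bounds `F u` from below,
  and by lower semicontinuity that score is at least `c` for small `ε`.
-/

open Metric Filter Topology

/-- The set `C_ε` of finite `ε`-chains from `a` to `b`: sequences
`v_0, …, v_k` with `v_0 = a`, `v_k = b` and `dist (v_i, v_{i+1}) ≤ ε`. -/
def epsChains {X : Type*} [MetricSpace X] (a b : X) (ε : ℝ) :
    Set (Σ k : ℕ, Fin (k + 1) → X) :=
  {p | p.2 0 = a ∧ p.2 (Fin.last p.1) = b ∧
    ∀ i : Fin p.1, dist (p.2 i.castSucc) (p.2 i.succ) ≤ ε}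

/-- The score of index `i` of the chain `v` at radius `ε'`:
`inf { F u : dist (u, v_i) < ε' }`. -/
noncomputable def chainScore {X : Type*} [MetricSpace X] (F : X → ℝ) (ε' : ℝ)
    {k : ℕ} (v : Fin (k + 1) → X) (i : Fin (k + 1)) : ℝ :=
  sInf (F '' Metric.ball (v i) ε')

/-- `i` is the least index at which `chainScore F ε' v` attains its maximum. -/
def isLeastArgmax {X : Type*} [MetricSpace X] (F : X → ℝ) (ε' : ℝ)
    {k : ℕ} (v : Fin (k + 1) → X) (i : Fin (k + 1)) : Prop :=
  (∀ l, chainScore F ε' v l ≤ chainScore F ε' v i) ∧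
    ∀ j, (∀ l, chainScore F ε' v l ≤ chainScore F ε' v j) → i ≤ j

/-- The `ε`-bottleneck set `B_ε = ⋃_{v ∈ C_ε} ball (v_{argmax^{2ε}(v)}) ε`. -/
def bottleneckSet {X : Type*} [MetricSpace X] (a b : X) (F : X → ℝ) (ε : ℝ) :
    Set X :=
  ⋃ p ∈ epsChains a b ε,
    {u | ∃ i, isLeastArgmax F (2 * ε) p.2 i ∧ dist u (p.2 i) < ε}

theorem exists_isLeastArgmax {X : Type*} [MetricSpace X] (F : X → ℝ) (ε' : ℝ)
    {k : ℕ} (v : Fin (k + 1) → X) : ∃ i, isLeastArgmax F ε' v i := by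
  obtain ⟨m, hm⟩ := Finite.exists_max (chainScore F ε' v)
  obtain ⟨i, hi, hmin⟩ := WellFounded.has_min (wellFounded_lt (α := Fin (k + 1)))
    {i | ∀ l, chainScore F ε' v l ≤ chainScore F ε' v i} ⟨m, hm⟩
  exact ⟨i, hi, fun j hj => not_lt.mp (hmin j hj)⟩

/-- Every point of the neighborhood is controlled by some chain: all scores of that chain are
bounded by the value of `F` there. -/
theorem exists_chain_score_le {X : Type*} [MetricSpace X] {a b : X} {F : X → ℝ}
    (hF0 : ∀ x, 0 ≤ F x) {ε : ℝ} {u : X}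
    (hu : ∃ x ∈ bottleneckSet a b F ε, dist u x < ε) :
    ∃ p ∈ epsChains a b ε, ∀ l, chainScore F (2 * ε) p.2 l ≤ F u := by
  obtain ⟨x, hx, hux⟩ := hu
  simp only [bottleneckSet, Set.mem_iUnion, Set.mem_ofPred_eq] at hx
  obtain ⟨p, hp, i, hi, hxi⟩ := hx
  refine ⟨p, hp, fun l => (hi.1 l).trans (csInf_le ⟨0, ?_⟩ ⟨u, ?_, rfl⟩)⟩
  · rintro _ ⟨y, -, rfl⟩
    exact hF0 y
  · rw [mem_ball]
    linarith [dist_triangle u x (p.2 i)]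

theorem bottleneck_le_minimax {X : Type*} [MetricSpace X] (a b : X) (F : X → ℝ)
    {ε : ℝ} (hε : 0 < ε) :
    sInf ((fun u => ENNReal.ofReal (F u)) '' {u | ∃ x ∈ bottleneckSet a b F ε, dist u x < ε}) ≤
      ⨅ p ∈ epsChains a b ε, ⨆ i : Fin (p.1 + 1), ENNReal.ofReal (F (p.2 i)) := by
  refine le_iInf₂ fun p hp => ?_
  obtain ⟨i, hi⟩ := exists_isLeastArgmax F (2 * ε) p.2
  refine le_trans (sInf_le ⟨p.2 i, ⟨p.2 i, ?_, by simpa using hε⟩, rfl⟩)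
    (le_iSup (fun i => ENNReal.ofReal (F (p.2 i))) i)
  simp only [bottleneckSet, Set.mem_iUnion, Set.mem_ofPred_eq]
  exact ⟨p, hp, i, hi, by simpa using hε⟩

/-- Moving each point of a bottleneck chain to a nearly optimal point of its `2 * ε`-ball, with
both endpoints kept, yields a `5 * ε`-chain. -/
theorem minimax_le_max_bottleneck {X : Type*} [MetricSpace X] (a b : X) (F : X → ℝ)
    (hF0 : ∀ x, 0 ≤ F x) (hFb : F b = 0) {ε : ℝ} (hε : 0 < ε) :
    (⨅ p ∈ epsChains a b (5 * ε), ⨆ i : Fin (p.1 + 1), ENNReal.ofReal (F (p.2 i))) ≤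
      max (ENNReal.ofReal (F a)) (sInf ((fun u => ENNReal.ofReal (F u)) ''
        {u | ∃ x ∈ bottleneckSet a b F ε, dist u x < ε})) := by
  rw [le_max_iff, or_iff_not_imp_left, not_le]
  intro hlt
  refine le_sInf ?_
  rintro _ ⟨u, hu, rfl⟩
  obtain ⟨⟨k, v⟩, ⟨hv0, hvk, hv⟩, hs⟩ := exists_chain_score_le hF0 hu
  dsimp only at hv0 hvk hv hs
  refine ENNReal.le_of_forall_pos_le_add fun δ hδ _ => ?_
  have hδ' : (0 : ℝ) < δ := hδ
  have key : ∀ l, ∃ x, dist x (v l) < 2 * ε ∧ F x ≤ max (F a) (F u + δ) ∧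
      (l = 0 → x = a) ∧ (l = Fin.last k → x = b) := by
    intro l
    by_cases h0 : l = 0
    · subst h0
      refine ⟨a, by simp [hv0, hε], le_max_left _ _, fun _ => rfl, fun h => ?_⟩
      rw [← hv0, ← hvk, h]
    by_cases hk : l = Fin.last k
    · subst hk
      exact ⟨b, by simp [hvk, hε], hFb.trans_le ((hF0 a).trans (le_max_left _ _)),
        fun h => absurd h h0, fun _ => rfl⟩
    · obtain ⟨_, ⟨x, hx, rfl⟩, hxlt⟩ := exists_lt_of_csInf_lt
        (s := F '' ball (v l) (2 * ε)) ⟨_, v l, by simp [hε], rfl⟩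
        (lt_of_le_of_lt (hs l) (lt_add_of_pos_right (F u) hδ'))
      exact ⟨x, hx, hxlt.le.trans (le_max_right _ _), fun h => absurd h h0,
        fun h => absurd h hk⟩
  choose w hwd hwF hw0 hwk using key
  have hw : (⟨k, w⟩ : Σ k : ℕ, Fin (k + 1) → X) ∈ epsChains a b (5 * ε) := by
    refine ⟨hw0 _ rfl, hwk _ rfl, fun i => ?_⟩
    have h1 := hwd i.castSucc
    have h2 := hwd i.succ
    rw [dist_comm] at h2
    have h3 := dist_triangle4 (w i.castSucc) (v i.castSucc) (v i.succ) (w i.succ)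
    change dist (w i.castSucc) (w i.succ) ≤ 5 * ε
    linarith [hv i]
  have hle : (⨅ p ∈ epsChains a b (5 * ε), ⨆ i : Fin (p.1 + 1), ENNReal.ofReal (F (p.2 i))) ≤
      ENNReal.ofReal (max (F a) (F u + δ)) :=
    (iInf₂_le _ hw).trans (iSup_le fun i => ENNReal.ofReal_le_ofReal (hwF i))
  rw [ENNReal.ofReal_max, le_max_iff] at hle
  refine (hle.resolve_left hlt.not_ge).trans ?_
  rw [ENNReal.ofReal_add (hF0 u) hδ'.le, ENNReal.ofReal_coe_nnreal]

/-- Lower semicontinuity at `a` makes `F a` a lower bound for the limit of the bottleneck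
infimum. -/
theorem eventually_le_bottleneck {X : Type*} [MetricSpace X] (a b : X) (F : X → ℝ)
    (hF0 : ∀ x, 0 ≤ F x) (hlsc : LowerSemicontinuous F) {c : ENNReal}
    (hc : c < ENNReal.ofReal (F a)) :
    ∀ᶠ ε in 𝓝[>] (0 : ℝ), c ≤ sInf ((fun u => ENNReal.ofReal (F u)) ''
      {u | ∃ x ∈ bottleneckSet a b F ε, dist u x < ε}) := by
  have hctop : c ≠ ⊤ := hc.ne_top
  have hc' : c.toReal < F a := (ENNReal.lt_ofReal_iff_toReal_lt hctop).mp hc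
  obtain ⟨r, hr, hball⟩ := Metric.eventually_nhds_iff_ball.mp (hlsc a _ hc')
  filter_upwards [Ioo_mem_nhdsGT (half_pos hr)] with ε hε
  refine le_sInf ?_
  rintro _ ⟨u, hu, rfl⟩
  obtain ⟨⟨k, v⟩, ⟨hv0, -, -⟩, hs⟩ := exists_chain_score_le hF0 hu
  dsimp only at hv0 hs
  have h0 : c.toReal ≤ chainScore F (2 * ε) v 0 := by
    refine le_csInf ⟨_, v 0, by simpa using hε.1, rfl⟩ ?_
    rintro _ ⟨x, hx, rfl⟩
    rw [hv0] at hx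
    exact (hball x (ball_subset_ball (by linarith [hε.2]) hx)).le
  exact (ENNReal.le_ofReal_iff_toReal_le hctop (hF0 u)).mpr (h0.trans (hs 0))

/-- The bottleneck identity: for a nonnegative lower semicontinuous `F` with
`F b = 0` and `ε`-chains from `a` to `b` for every `ε > 0`, the limit as
`ε → 0⁺` of `inf { F u : u ∈ V(B_ε, ε) }` exists in `[0, ∞]` and equals the
limit as `ε → 0⁺` of `inf { max_i F (v_i) : v ∈ C_ε }`. -/
theorem bottleneck_identity {X : Type*} [MetricSpace X] (a b : X) (F : X → ℝ)
    (hF0 : ∀ x, 0 ≤ F x) (hlsc : LowerSemicontinuous F) (hFb : F b = 0)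
    (hne : ∀ ε > (0 : ℝ), (epsChains a b ε).Nonempty) :
    ∃ L : ENNReal,
      Tendsto (fun ε : ℝ =>
          sInf ((fun u => ENNReal.ofReal (F u)) ''
            {u | ∃ x ∈ bottleneckSet a b F ε, dist u x < ε}))
        (𝓝[>] 0) (𝓝 L) ∧
      Tendsto (fun ε : ℝ =>
          ⨅ p ∈ epsChains a b ε, ⨆ i : Fin (p.1 + 1), ENNReal.ofReal (F (p.2 i)))
        (𝓝[>] 0) (𝓝 L) := by
  set G : ℝ → ENNReal := fun ε => sInf ((fun u => ENNReal.ofReal (F u)) ''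
    {u | ∃ x ∈ bottleneckSet a b F ε, dist u x < ε})
  set H : ℝ → ENNReal := fun ε =>
    ⨅ p ∈ epsChains a b ε, ⨆ i : Fin (p.1 + 1), ENNReal.ofReal (F (p.2 i))
  have hanti : Antitone H := fun ε ε' h => le_iInf₂ fun p hp =>
    iInf₂_le p ⟨hp.1, hp.2.1, fun i => (hp.2.2 i).trans h⟩
  have hHlim : Tendsto H (𝓝[>] 0) (𝓝 (sSup (H '' Set.Ioi 0))) :=
    hanti.tendsto_nhdsGT 0
  refine ⟨_, ?_, hHlim⟩
  rw [tendsto_order]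
  constructor
  · intro c hc
    -- The estimates are applied to an intermediate value `d`, as the one at `a` is not strict.
    obtain ⟨d, hcd, hd⟩ := exists_between hc
    have h5 : Tendsto (fun ε : ℝ => 5 * ε) (𝓝[>] 0) (𝓝[>] 0) := by
      refine tendsto_nhdsWithin_iff.mpr ⟨?_, ?_⟩
      · have : Tendsto (fun ε : ℝ => 5 * ε) (𝓝 0) (𝓝 (5 * 0)) := tendsto_id.const_mul 5
        rw [mul_zero] at this
        exact this.mono_left nhdsWithin_le_nhds
      · filter_upwards [self_mem_nhdsWithin] with ε hε
        exact mul_pos (by norm_num : (0 : ℝ) < 5) hε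
    rcases lt_or_ge d (ENNReal.ofReal (F a)) with hda | hda
    · filter_upwards [eventually_le_bottleneck a b F hF0 hlsc hda] with ε hε
      exact hcd.trans_le hε
    · filter_upwards [(hHlim.comp h5).eventually (lt_mem_nhds hd), self_mem_nhdsWithin]
        with ε hdε hε
      have hmax := lt_of_lt_of_le hdε (minimax_le_max_bottleneck a b F hF0 hFb hε)
      exact hcd.trans ((lt_max_iff.mp hmax).resolve_left hda.not_gt)
  · intro c hc
    filter_upwards [hHlim.eventually (gt_mem_nhds hc), self_mem_nhdsWithin] with ε hcε hε
    exact (bottleneck_le_minimax a b F hε).trans_lt hcε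
end

section
/- Let λ ∈ (0, 1). Then sup { min( 1 + (2 − m)·λ , 4λ + 2(1 − λ)·√((1 + m)/2) ) : m ∈ [−1, 1] } < 1 + 3λ. -/
/-- For `λ ∈ (0,1)`,
`sup { min (1 + (2-m)·λ) (4λ + 2(1-λ)·√((1+m)/2)) : m ∈ [-1,1] } < 1 + 3λ`. -/
theorem sup_min_profiles_lt (lam : ℝ) (hlam : lam ∈ Set.Ioo (0 : ℝ) 1) :
    sSup {r : ℝ | ∃ m ∈ Set.Icc (-1 : ℝ) 1,
        r = min (1 + (2 - m) * lam)
          (4 * lam + 2 * (1 - lam) * Real.sqrt ((1 + m) / 2))}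
      < 1 + 3 * lam := by
  obtain ⟨h0, h1⟩ := hlam
  -- With `s = √((1+m)/2)` the two energies are `1 + 3λ - 2λs²` and `1 + 3λ - (1-λ)(1-2s)`.
  -- Splitting at `s = 1/4`, one of the deficits is at least `λ/8` or `(1-λ)/2`, and both of
  -- these are at least `λ(1-λ)/8`, which gives a bound uniform in `m`.
  have hpos : 0 < lam * (1 - lam) := mul_pos h0 (sub_pos.2 h1)
  refine lt_of_le_of_lt (b := 1 + 3 * lam - lam * (1 - lam) / 8) (csSup_le ?_ ?_) (by linarith)
  · exact ⟨_, 0, by norm_num, rfl⟩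
  · rintro r ⟨m, ⟨hm, -⟩, rfl⟩
    have hs : Real.sqrt ((1 + m) / 2) ^ 2 = (1 + m) / 2 := Real.sq_sqrt (by linarith)
    generalize Real.sqrt ((1 + m) / 2) = s at hs ⊢
    obtain rfl : m = 2 * s ^ 2 - 1 := by linarith
    rcases le_total s (1 / 4) with h | h
    · refine (min_le_right _ _).trans ?_
      nlinarith [mul_nonneg (sub_nonneg.2 h1.le) (sub_nonneg.2 h)]
    · refine (min_le_left _ _).trans ?_
      have hsq : 1 / 16 ≤ s ^ 2 := by nlinarith
      nlinarith [mul_nonneg h0.le (sub_nonneg.2 hsq)]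
end
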